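/- Let (α_i)_{i∈ℕ} be an absolutely summable sequence of real numbers and (x_i)_{i∈ℕ} a sequence of real numbers. Define v(p) = (2π)^{-1/2} Σ_{m∈ℕ} α_m e^{−ipx_m} and v_N(p) = (2π)^{-1/2} Σ_{m=1}^N α_m e^{−ipx_m}. Then for every t > 0, sup_{p∈ℝ} ∫_ℝ |φ_t(p,q)| · |v(p−q) − v_N(p−q)| dq converges to 0 as N → ∞. -/

import Mathlib

open MeasureTheory Filter Topology

/-- The first-order Dyson kernel factor:
`φ_t(p,q) = (e^{it(p²−q²)} − 1)/(i(p²−q²))` if `p² ≠ q²`, and `t` otherwise. -/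
noncomputable def phiK (t p q : ℝ) : ℂ :=
  if p ^ 2 = q ^ 2 then (t : ℂ)
  else (Complex.exp (Complex.I * t * ((p : ℂ) ^ 2 - (q : ℂ) ^ 2)) - 1) /
    (Complex.I * ((p : ℂ) ^ 2 - (q : ℂ) ^ 2))

/-- Fourier transform of `Σ_{i=1}^∞ α_i δ(· − x_i)` with `ℓ¹` couplings. -/
noncomputable def countableFT (α : ℕ → ℝ) (x : ℕ → ℝ) (p : ℝ) : ℂ :=
  ((Real.sqrt (2 * Real.pi) : ℝ) : ℂ)⁻¹ *
    ∑' m : ℕ, (α m : ℂ) * Complex.exp (-Complex.I * p * x m)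

/-- Fourier transform of the truncation to the first `N` centers. -/
noncomputable def truncatedFT (α : ℕ → ℝ) (x : ℕ → ℝ) (N : ℕ) (p : ℝ) : ℂ :=
  ((Real.sqrt (2 * Real.pi) : ℝ) : ℂ)⁻¹ *
    ∑ m ∈ Finset.range N, (α m : ℂ) * Complex.exp (-Complex.I * p * x m)

theorem phiK_bound (t p q : ℝ) (ht : 0 < t) :
    ‖phiK t p q‖ ≤ (t + 2) * ((1 + (q - p) ^ 2)⁻¹ + (1 + (q + p) ^ 2)⁻¹) := by
  have h1 : ‖phiK t p q‖ ≤ t ∧ ‖phiK t p q‖ * |p ^ 2 - q ^ 2| ≤ 2 := by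
    unfold phiK
    split_ifs with h
    · simp [h, abs_of_pos ht]
    · have h0 : 0 < |p ^ 2 - q ^ 2| := abs_pos.mpr (sub_ne_zero.mpr h)
      have e1 : Complex.I * t * ((p : ℂ) ^ 2 - (q : ℂ) ^ 2)
          = Complex.I * ((t * (p ^ 2 - q ^ 2) : ℝ) : ℂ) := by push_cast; ring
      have e2 : ‖Complex.I * ((p : ℂ) ^ 2 - (q : ℂ) ^ 2)‖ = |p ^ 2 - q ^ 2| := by
        rw [norm_mul, Complex.norm_I, one_mul, ← Complex.ofReal_pow, ← Complex.ofReal_pow,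
          ← Complex.ofReal_sub, Complex.norm_real, Real.norm_eq_abs]
      rw [norm_div, e2, e1]
      constructor
      · rw [div_le_iff₀ h0]
        refine (Real.norm_exp_I_mul_ofReal_sub_one_le).trans ?_
        rw [Real.norm_eq_abs, abs_mul, abs_of_pos ht]
      · rw [div_mul_cancel₀ _ h0.ne']
        refine (norm_sub_le _ _).trans ?_
        rw [Complex.norm_exp_I_mul_ofReal]
        norm_num
  obtain ⟨ha, hb⟩ := h1
  have hn := norm_nonneg (phiK t p q)
  have key : ∀ d : ℝ, d ^ 2 ≤ |p ^ 2 - q ^ 2| → ‖phiK t p q‖ ≤ (t + 2) * (1 + d ^ 2)⁻¹ := by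
    intro d hd
    rw [← div_eq_mul_inv, le_div_iff₀ (by positivity)]
    nlinarith [mul_le_mul_of_nonneg_left hd hn]
  have hf : |p ^ 2 - q ^ 2| = |q - p| * |q + p| := by
    rw [← abs_mul, ← abs_neg]; congr 1; ring
  have i1 : 0 ≤ (t + 2) * (1 + (q - p) ^ 2)⁻¹ := by positivity
  have i2 : 0 ≤ (t + 2) * (1 + (q + p) ^ 2)⁻¹ := by positivity
  rw [mul_add]
  rcases le_total |q - p| |q + p| with h | h
  · have := key (q - p) (by
      rw [hf, ← sq_abs, sq]; exact mul_le_mul_of_nonneg_left h (abs_nonneg _))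
    linarith
  · have := key (q + p) (by
      rw [hf, ← sq_abs, sq]; exact mul_le_mul_of_nonneg_right h (abs_nonneg _))
    linarith

theorem phiK_lintegral_bound (t p : ℝ) (ht : 0 < t) :
    ∫⁻ q : ℝ, (‖phiK t p q‖₊ : ENNReal) ≤ ENNReal.ofReal ((t + 2) * (Real.pi + Real.pi)) := by
  have ia : Integrable (fun q : ℝ => (1 + (q - p) ^ 2)⁻¹) :=
    integrable_inv_one_add_sq.comp_sub_right p
  have ib : Integrable (fun q : ℝ => (1 + (q + p) ^ 2)⁻¹) :=
    integrable_inv_one_add_sq.comp_add_right p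
  have hI : ∫ q : ℝ, (t + 2) * ((1 + (q - p) ^ 2)⁻¹ + (1 + (q + p) ^ 2)⁻¹)
      = (t + 2) * (Real.pi + Real.pi) := by
    rw [integral_const_mul, integral_add ia ib,
      integral_sub_right_eq_self (fun q : ℝ => (1 + q ^ 2)⁻¹) p,
      integral_add_right_eq_self (fun q : ℝ => (1 + q ^ 2)⁻¹) p,
      integral_univ_inv_one_add_sq]
  have ic : Integrable (fun q : ℝ => (t + 2) * ((1 + (q - p) ^ 2)⁻¹ + (1 + (q + p) ^ 2)⁻¹)) :=
    (ia.add ib).const_mul _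
  rw [← hI, ofReal_integral_eq_lintegral_ofReal ic
    (Eventually.of_forall fun q => by dsimp; positivity)]
  refine lintegral_mono fun q => ?_
  rw [← enorm_eq_nnnorm, ← ofReal_norm]
  exact ENNReal.ofReal_le_ofReal (phiK_bound t p q ht)

theorem diff_bound (α : ℕ → ℝ) (hα : Summable fun i => |α i|) (x : ℕ → ℝ) (N : ℕ) (p : ℝ) :
    ‖countableFT α x p - truncatedFT α x N p‖ ≤
      (Real.sqrt (2 * Real.pi))⁻¹ * ∑' m, |α (m + N)| := by
  have hn : ∀ m, ‖(α m : ℂ) * Complex.exp (-Complex.I * p * x m)‖ = |α m| := by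
    intro m
    have : -Complex.I * p * x m = Complex.I * ((-(p * x m) : ℝ) : ℂ) := by push_cast; ring
    rw [norm_mul, this, Complex.norm_exp_I_mul_ofReal, mul_one, Complex.norm_real,
      Real.norm_eq_abs]
  have hs : Summable fun m => ‖(α m : ℂ) * Complex.exp (-Complex.I * p * x m)‖ := by
    simpa only [hn] using hα
  have hd : countableFT α x p - truncatedFT α x N p = ((Real.sqrt (2 * Real.pi) : ℝ) : ℂ)⁻¹ *
      ∑' m : ℕ, (α (m + N) : ℂ) * Complex.exp (-Complex.I * p * x (m + N)) := by
    have h := hs.of_norm.sum_add_tsum_nat_add N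
    unfold countableFT truncatedFT
    rw [← h]
    ring
  have hle : ‖∑' m : ℕ, (α (m + N) : ℂ) * Complex.exp (-Complex.I * p * x (m + N))‖
      ≤ ∑' m, |α (m + N)| := by
    refine tsum_of_norm_bounded ((summable_nat_add_iff N).mpr hα).hasSum fun m => ?_
    exact (hn (m + N)).le
  rw [hd, norm_mul, norm_inv, Complex.norm_real, Real.norm_eq_abs,
    abs_of_nonneg (Real.sqrt_nonneg _)]
  exact mul_le_mul_of_nonneg_left hle (inv_nonneg.mpr (Real.sqrt_nonneg _))

/-- First-order kernel estimate behind Theorem 3.4 (countably many centers): for every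
`t > 0`, `sup_p ∫ |φ_t(p,q)| · |v(p−q) − v_N(p−q)| dq → 0` as `N → ∞`. -/
theorem countable_centers_first_kernel_tendsto (α : ℕ → ℝ)
    (hα : Summable fun i => |α i|) (x : ℕ → ℝ) :
    ∀ t : ℝ, 0 < t → Tendsto
      (fun N : ℕ => ⨆ p : ℝ, ∫⁻ q : ℝ, (‖phiK t p q‖₊ : ENNReal) *
        (‖countableFT α x (p - q) - truncatedFT α x N (p - q)‖₊ : ENNReal))
      atTop (𝓝 0) := by
  intro t ht
  have hT : Tendsto (fun N : ℕ => ENNReal.ofReal ((t + 2) * (Real.pi + Real.pi)) *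
      ENNReal.ofReal ((Real.sqrt (2 * Real.pi))⁻¹ * ∑' m, |α (m + N)|)) atTop (𝓝 0) := by
    have h := (tendsto_sum_nat_add (fun i => |α i|)).const_mul (Real.sqrt (2 * Real.pi))⁻¹
    have h2 := ENNReal.Tendsto.const_mul (a := ENNReal.ofReal ((t + 2) * (Real.pi + Real.pi)))
      (ENNReal.tendsto_ofReal h) (Or.inr ENNReal.ofReal_ne_top)
    simpa using h2
  refine tendsto_of_tendsto_of_tendsto_of_le_of_le tendsto_const_nhds hT
    (fun _ => zero_le) (fun N => iSup_le fun p => ?_)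
  refine le_trans ?_ (mul_le_mul_left (phiK_lintegral_bound t p ht) _)
  rw [← lintegral_mul_const' _ _ ENNReal.ofReal_ne_top]
  refine lintegral_mono fun q => ?_
  refine mul_le_mul_right ?_ _
  rw [← enorm_eq_nnnorm, ← ofReal_norm]
  exact ENNReal.ofReal_le_ofReal (diff_bound α hα x N (p - q))
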